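/- arXiv:2405.18962 — 2 statements merged into one kernel-verified Lean document; each statement's English description precedes it below -/
import Mathlib

section
/- For k ∈ [0,T−1] there exist subspaces 𝒮_i ⊆ ℝ^{1×(i+1)(m+p)}, i ∈ [0,k], such that leftkernel(H_k) = (⊕_{i=0}^{k} σ^{k−i} 𝒮_i) ⊕ (leftkernel(G_k) × {0}^p), and dim 𝒮_k = δ_{k−1} − δ_k, where σ is the shift that prepends a zero m-block and a zero p-block to the input part and output part of a left-kernel vector respectively. -/
open Matrix
noncomputable section

/-- Block Hankel matrix of depth k+1 built from f_0, ..., f_{T-1}. -/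
def hankel {r T : ℕ} (f : Fin T → Fin r → ℝ) (k : ℕ) :
    Matrix (Fin (k + 1) × Fin r) (Fin (T - k)) ℝ :=
  Matrix.of fun ia j =>
    f ⟨(ia.1 : ℕ) + (j : ℕ), by have h1 := ia.1.isLt; have h2 := j.isLt; omega⟩ ia.2

/-- H_k : Hankel matrix of depth k+1 of the stacked data (u; y). -/
def Hmat {m p T : ℕ} (u : Fin T → Fin m → ℝ) (y : Fin T → Fin p → ℝ) (k : ℕ) :
    Matrix ((Fin (k + 1) × Fin m) ⊕ (Fin (k + 1) × Fin p)) (Fin (T - k)) ℝ :=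
  Matrix.fromRows (hankel u k) (hankel y k)

/-- G_k : H_k with its last p rows (the y_k block) deleted. -/
def Gmat {m p T : ℕ} (u : Fin T → Fin m → ℝ) (y : Fin T → Fin p → ℝ) (k : ℕ) :
    Matrix ((Fin (k + 1) × Fin m) ⊕ (Fin k × Fin p)) (Fin (T - k)) ℝ :=
  Matrix.fromRows (hankel u k)
    (Matrix.of fun ia j =>
      y ⟨(ia.1 : ℕ) + (j : ℕ), by have h1 := ia.1.isLt; have h2 := j.isLt; omega⟩ ia.2)

/-- δ_k = rank H_k − rank G_k. -/
def delta {m p T : ℕ} (u : Fin T → Fin m → ℝ) (y : Fin T → Fin p → ℝ) (k : ℕ) : ℕ :=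
  (Hmat u y k).rank - (Gmat u y k).rank

/-- The left kernel of a matrix: row vectors v with v M = 0. -/
def leftKernel {ι κ : Type*} [Fintype ι] (M : Matrix ι κ ℝ) : Submodule ℝ (ι → ℝ) :=
  LinearMap.ker M.vecMulLinear

/-- Row-index type of the depth-(k+1) data Hankel matrix H_k. -/
abbrev IdxH (m p k : ℕ) := (Fin (k + 1) × Fin m) ⊕ (Fin (k + 1) × Fin p)

/-- Row-index type of G_k (H_k with last p rows deleted). -/
abbrev IdxG (m p k : ℕ) := (Fin (k + 1) × Fin m) ⊕ (Fin k × Fin p)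

/-- The shift σ: prepend a zero m-block to the input part and a zero p-block to the
output part of a left-kernel row vector. -/
def shiftL (m p j : ℕ) : (IdxH m p j → ℝ) →ₗ[ℝ] (IdxH m p (j + 1) → ℝ) where
  toFun v := Sum.elim
    (fun ia => if h : (ia.1 : ℕ) = 0 then 0
      else v (Sum.inl (⟨(ia.1 : ℕ) - 1, by have := ia.1.isLt; omega⟩, ia.2)))
    (fun ia => if h : (ia.1 : ℕ) = 0 then 0
      else v (Sum.inr (⟨(ia.1 : ℕ) - 1, by have := ia.1.isLt; omega⟩, ia.2)))
  map_add' v w := by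
    funext z
    cases z <;> simp only [Sum.elim_inl, Sum.elim_inr, Pi.add_apply] <;>
      split <;> simp
  map_smul' c v := by
    funext z
    cases z <;> simp only [Sum.elim_inl, Sum.elim_inr, Pi.smul_apply, RingHom.id_apply,
      smul_eq_mul] <;> split <;> simp

/-- σ^t applied to a subspace of level-j left-kernel vectors. -/
def shiftIter (m p j : ℕ) : (t : ℕ) → Submodule ℝ (IdxH m p j → ℝ) →
    Submodule ℝ (IdxH m p (j + t) → ℝ)
  | 0, S => S
  | t + 1, S => Submodule.map (shiftL m p (j + t)) (shiftIter m p j t S)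

/-- Embedding of G_k-row vectors into H_k-row vectors by appending p zeros
(the y_k block): realizes leftkernel(G_k) × {0}^p. -/
def embedG (m p k : ℕ) : (IdxG m p k → ℝ) →ₗ[ℝ] (IdxH m p k → ℝ) where
  toFun v := Sum.elim
    (fun ia => v (Sum.inl ia))
    (fun ia => if h : (ia.1 : ℕ) < k then v (Sum.inr (⟨(ia.1 : ℕ), h⟩, ia.2)) else 0)
  map_add' v w := by
    funext z
    cases z <;> simp only [Sum.elim_inl, Sum.elim_inr, Pi.add_apply] <;>
      first | rfl | (split <;> simp)
  map_smul' c v := by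
    funext z
    cases z <;> simp only [Sum.elim_inl, Sum.elim_inr, Pi.smul_apply, RingHom.id_apply,
      smul_eq_mul] <;> first | rfl | (split <;> simp)

/-- δ extended with δ_{-1} = p: `deltaExt u y (k+1) = δ_k`, `deltaExt u y 0 = p`. -/
def deltaExt {m p T : ℕ} (u : Fin T → Fin m → ℝ) (y : Fin T → Fin p → ℝ) : ℕ → ℕ
  | 0 => p
  | j + 1 => delta u y j

/-! ### Helper lemmas -/

theorem mem_leftKernel_Hmat {m p T : ℕ} (u : Fin T → Fin m → ℝ) (y : Fin T → Fin p → ℝ) (k : ℕ)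
    (v : IdxH m p k → ℝ) : v ∈ leftKernel (Hmat u y k) ↔ ∀ j : Fin (T - k),
      (∑ i : Fin (k + 1), ∑ a, v (Sum.inl (i, a)) * u ⟨(i : ℕ) + (j : ℕ), by omega⟩ a) +
      (∑ i : Fin (k + 1), ∑ a, v (Sum.inr (i, a)) * y ⟨(i : ℕ) + (j : ℕ), by omega⟩ a) = 0 := by
  simp only [leftKernel, LinearMap.mem_ker, Matrix.vecMulLinear_apply, funext_iff, Matrix.vecMul,
    dotProduct, Fintype.sum_sum_type, Fintype.sum_prod_type, Hmat, hankel, Matrix.fromRows_apply_inl,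
    Matrix.fromRows_apply_inr, Matrix.of_apply, Pi.zero_apply]

theorem mem_leftKernel_Gmat {m p T : ℕ} (u : Fin T → Fin m → ℝ) (y : Fin T → Fin p → ℝ) (k : ℕ)
    (v : IdxG m p k → ℝ) : v ∈ leftKernel (Gmat u y k) ↔ ∀ j : Fin (T - k),
      (∑ i : Fin (k + 1), ∑ a, v (Sum.inl (i, a)) * u ⟨(i : ℕ) + (j : ℕ), by omega⟩ a) +
      (∑ i : Fin k, ∑ a, v (Sum.inr (i, a)) * y ⟨(i : ℕ) + (j : ℕ), by omega⟩ a) = 0 := by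
  simp only [leftKernel, LinearMap.mem_ker, Matrix.vecMulLinear_apply, funext_iff, Matrix.vecMul,
    dotProduct, Fintype.sum_sum_type, Fintype.sum_prod_type, Gmat, hankel, Matrix.fromRows_apply_inl,
    Matrix.fromRows_apply_inr, Matrix.of_apply, Pi.zero_apply]

theorem embedG_mem {m p T : ℕ} (u : Fin T → Fin m → ℝ) (y : Fin T → Fin p → ℝ) (k : ℕ)
    (w : IdxG m p k → ℝ) :
    embedG m p k w ∈ leftKernel (Hmat u y k) ↔ w ∈ leftKernel (Gmat u y k) := by
  rw [mem_leftKernel_Hmat, mem_leftKernel_Gmat]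
  refine forall_congr' fun j => ?_
  rw [Fin.sum_univ_castSucc (fun i : Fin (k + 1) => ∑ a, embedG m p k w (Sum.inr (i, a)) * _)]
  simp [embedG]

theorem embedG_injective (m p k : ℕ) : Function.Injective (embedG m p k) := by
  intro v w h
  funext z
  rcases z with z | ⟨i, a⟩
  · exact congrFun h (Sum.inl z)
  · have := congrFun h (Sum.inr (i.castSucc, a))
    simpa [embedG] using this

/-- The subspace `leftkernel(G_k) × {0}^p` is the part of `leftkernel(H_k)` with zero last block. -/
theorem mem_N {m p T : ℕ} (u : Fin T → Fin m → ℝ) (y : Fin T → Fin p → ℝ) (k : ℕ)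
    (v : IdxH m p k → ℝ) :
    v ∈ Submodule.map (embedG m p k) (leftKernel (Gmat u y k)) ↔
      v ∈ leftKernel (Hmat u y k) ∧ ∀ a, v (Sum.inr (Fin.last k, a)) = 0 := by
  constructor
  · rintro ⟨w, hw, rfl⟩
    exact ⟨(embedG_mem u y k w).2 hw, fun a => by simp [embedG]⟩
  · rintro ⟨h1, h2⟩
    let w : IdxG m p k → ℝ := Sum.elim (fun z => v (Sum.inl z))
      (fun z => v (Sum.inr (z.1.castSucc, z.2)))
    have hv : embedG m p k w = v := by
      funext z
      rcases z with z | ⟨i, a⟩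
      · rfl
      · by_cases h : (i : ℕ) < k
        · simp [embedG, w, h]
        · have : i = Fin.last k := by ext; simp; omega
          subst this
          simp [embedG, h2]
    refine ⟨w, (embedG_mem u y k w).1 (hv ▸ h1), hv⟩

theorem shiftL_mem {m p T : ℕ} (u : Fin T → Fin m → ℝ) (y : Fin T → Fin p → ℝ) (k : ℕ)
    (v : IdxH m p k → ℝ) (hv : v ∈ leftKernel (Hmat u y k)) :
    shiftL m p k v ∈ leftKernel (Hmat u y (k + 1)) := by
  rw [mem_leftKernel_Hmat] at hv ⊢
  intro j
  have h := hv ⟨(j : ℕ) + 1, by omega⟩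
  rw [Fin.sum_univ_succ (fun i : Fin (k + 1 + 1) =>
      ∑ a, shiftL m p k v (Sum.inl (i, a)) * _),
    Fin.sum_univ_succ (fun i : Fin (k + 1 + 1) =>
      ∑ a, shiftL m p k v (Sum.inr (i, a)) * _)]
  simp only [shiftL, LinearMap.coe_mk, AddHom.coe_mk, Sum.elim_inl, Sum.elim_inr, Fin.val_zero,
    Fin.val_succ, dite_true, zero_mul, Finset.sum_const_zero, zero_add, Nat.add_sub_cancel,
    Nat.succ_ne_zero, dite_false, Nat.add_eq_zero_iff, one_ne_zero, and_false]
  simp only [← add_assoc, add_right_comm _ 1 _] at h ⊢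
  simpa [add_right_comm _ 1 _] using h

theorem shiftL_injective (m p k : ℕ) : Function.Injective (shiftL m p k) := by
  intro v w h
  funext z
  rcases z with ⟨i, a⟩ | ⟨i, a⟩
  · have := congrFun h (Sum.inl (i.succ, a))
    simpa [shiftL] using this
  · have := congrFun h (Sum.inr (i.succ, a))
    simpa [shiftL] using this

theorem shiftL_last (m p k : ℕ) (v : IdxH m p k → ℝ) (a : Fin p) :
    shiftL m p k v (Sum.inr (Fin.last (k + 1), a)) = v (Sum.inr (Fin.last k, a)) := by
  simp [shiftL]
  rfl

abbrev LK {m p T : ℕ} (u : Fin T → Fin m → ℝ) (y : Fin T → Fin p → ℝ) (k : ℕ) :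
    Submodule ℝ (IdxH m p k → ℝ) := leftKernel (Hmat u y k)

abbrev NK {m p T : ℕ} (u : Fin T → Fin m → ℝ) (y : Fin T → Fin p → ℝ) (k : ℕ) :
    Submodule ℝ (IdxH m p k → ℝ) := Submodule.map (embedG m p k) (leftKernel (Gmat u y k))

/-- The subspace complemented at each level. -/
def BK {m p T : ℕ} (u : Fin T → Fin m → ℝ) (y : Fin T → Fin p → ℝ) :
    (k : ℕ) → Submodule ℝ (IdxH m p k → ℝ)
  | 0 => NK u y 0
  | k + 1 => Submodule.map (shiftL m p k) (LK u y k) ⊔ NK u y (k + 1)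

theorem NK_le {m p T : ℕ} (u : Fin T → Fin m → ℝ) (y : Fin T → Fin p → ℝ) (k : ℕ) :
    NK u y k ≤ LK u y k := fun v hv => ((mem_N u y k v).1 hv).1

theorem BK_le {m p T : ℕ} (u : Fin T → Fin m → ℝ) (y : Fin T → Fin p → ℝ) (k : ℕ) :
    BK u y k ≤ LK u y k := by
  cases k with
  | zero => exact NK_le u y 0
  | succ k =>
    refine sup_le ?_ (NK_le u y _)
    rintro _ ⟨v, hv, rfl⟩
    exact shiftL_mem u y k v hv

theorem exists_S {m p T : ℕ} (u : Fin T → Fin m → ℝ) (y : Fin T → Fin p → ℝ) :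
    ∃ S : (k : ℕ) → Submodule ℝ (IdxH m p k → ℝ),
      ∀ k, Disjoint (BK u y k) (S k) ∧ BK u y k ⊔ S k = LK u y k :=
  ⟨fun k => (IsModularLattice.exists_disjoint_and_sup_eq (BK_le u y k)).choose,
    fun k => (IsModularLattice.exists_disjoint_and_sup_eq (BK_le u y k)).choose_spec⟩

theorem finrank_leftKernel {ι : Type*} [Fintype ι] {n : ℕ} (M : Matrix ι (Fin n) ℝ) :
    M.rank + Module.finrank ℝ (leftKernel M) = Fintype.card ι := by
  have h := LinearMap.finrank_range_add_finrank_ker M.vecMulLinear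
  rw [Module.finrank_fintype_fun_eq_card] at h
  rw [← h, leftKernel, M.rank_eq_finrank_span_row, range_vecMulLinear]

theorem finrank_map_inj {V W : Type*} [AddCommGroup V] [AddCommGroup W] [Module ℝ V] [Module ℝ W]
    (f : V →ₗ[ℝ] W) (hf : Function.Injective f) (A : Submodule ℝ V) :
    Module.finrank ℝ (Submodule.map f A) = Module.finrank ℝ A :=
  (LinearEquiv.finrank_eq (Submodule.equivMapOfInjective f hf A)).symm

theorem finrank_LK_NK {m p T : ℕ} (u : Fin T → Fin m → ℝ) (y : Fin T → Fin p → ℝ) (k : ℕ) :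
    Module.finrank ℝ (LK u y k) + delta u y k = Module.finrank ℝ (NK u y k) + p := by
  have h1 : _ + Module.finrank ℝ (LK u y k) = _ := finrank_leftKernel (Hmat u y k)
  have h2 := finrank_leftKernel (Gmat u y k)
  have h3 : Module.finrank ℝ (NK u y k) = Module.finrank ℝ (leftKernel (Gmat u y k)) :=
    finrank_map_inj _ (embedG_injective m p k) _
  have h4 : (Gmat u y k).rank ≤ (Hmat u y k).rank := by
    have : Gmat u y k = (Hmat u y k).submatrix
        (Sum.map id (fun z : Fin k × Fin p => (z.1.castSucc, z.2))) id := by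
      ext z j
      rcases z with z | z <;> rfl
    rw [this]
    exact Matrix.rank_submatrix_le _ _ _
  simp only [Fintype.card_sum, Fintype.card_prod, Fintype.card_fin, add_mul, one_mul] at h1 h2
  simp only [delta]
  omega

theorem finrank_S {m p T : ℕ} (u : Fin T → Fin m → ℝ) (y : Fin T → Fin p → ℝ) (k : ℕ)
    (S : Submodule ℝ (IdxH m p k → ℝ)) (h1 : Disjoint (BK u y k) S)
    (h2 : BK u y k ⊔ S = LK u y k) :
    Module.finrank ℝ S = deltaExt u y k - deltaExt u y (k + 1) := by
  have e := Submodule.finrank_sup_add_finrank_inf_eq (BK u y k) S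
  rw [h1.eq_bot, h2, finrank_bot, add_zero] at e
  have a := finrank_LK_NK u y k
  cases k with
  | zero =>
    simp only [deltaExt]
    change Module.finrank ℝ (LK u y 0) = Module.finrank ℝ (NK u y 0) + _ at e
    omega
  | succ k =>
    have b := finrank_LK_NK u y k
    have f := Submodule.finrank_sup_add_finrank_inf_eq
      (Submodule.map (shiftL m p k) (LK u y k)) (NK u y (k + 1))
    have g : Submodule.map (shiftL m p k) (LK u y k) ⊓ NK u y (k + 1) =
        Submodule.map (shiftL m p k) (NK u y k) := by
      ext v
      constructor
      · rintro ⟨⟨w, hw, rfl⟩, hv⟩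
        refine ⟨w, (mem_N u y k w).2 ⟨hw, fun a => ?_⟩, rfl⟩
        rw [← shiftL_last m p k w a]
        exact ((mem_N u y (k + 1) _).1 hv).2 a
      · rintro ⟨w, hw, rfl⟩
        have hw' := (mem_N u y k w).1 hw
        refine ⟨⟨w, hw'.1, rfl⟩, (mem_N u y (k + 1) _).2 ⟨shiftL_mem u y k w hw'.1, fun a => ?_⟩⟩
        rw [shiftL_last]
        exact hw'.2 a
    rw [g, finrank_map_inj _ (shiftL_injective m p k),
      finrank_map_inj _ (shiftL_injective m p k)] at f
    simp only [deltaExt]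
    change Module.finrank ℝ (LK u y (k + 1)) = Module.finrank ℝ (Submodule.map (shiftL m p k)
      (LK u y k) ⊔ NK u y (k + 1) : Submodule ℝ (IdxH m p (k + 1) → ℝ)) + _ at e
    change _ = Module.finrank ℝ (LK u y k) + Module.finrank ℝ (NK u y (k + 1)) at f
    omega

/-- The shifted copies at level `k`. -/
def FK {m p : ℕ} (S : (k : ℕ) → Submodule ℝ (IdxH m p k → ℝ)) :
    (k : ℕ) → Fin (k + 1) → Submodule ℝ (IdxH m p k → ℝ)
  | 0 => fun _ => S 0
  | k + 1 => Fin.lastCases (S (k + 1)) (fun i => Submodule.map (shiftL m p k) (FK S k i))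

theorem cast_shiftIter {m p i : ℕ} (S : Submodule ℝ (IdxH m p i → ℝ)) (n t : ℕ)
    (h : i + n = i + t) :
    cast (congrArg (fun t => Submodule ℝ (IdxH m p t → ℝ)) h) (shiftIter m p i n S) =
      shiftIter m p i t S := by
  have : n = t := by omega
  subst this
  rfl

theorem FK_eq {m p : ℕ} (S : (k : ℕ) → Submodule ℝ (IdxH m p k → ℝ)) (i t : ℕ) :
    FK S (i + t) ⟨i, by omega⟩ = shiftIter m p i t (S i) := by
  induction t with
  | zero =>
    cases i with
    | zero => rfl
    | succ i => exact Fin.lastCases_last (motive := fun _ => Submodule ℝ (IdxH m p (i + 1) → ℝ))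
  | succ t ih =>
    rw [shiftIter, ← ih]
    exact Fin.lastCases_castSucc (motive := fun _ => Submodule ℝ (IdxH m p (i + t + 1) → ℝ)) (i := (⟨i, by omega⟩ : Fin (i + t + 1)))

theorem FK_cast {m p : ℕ} (S : (k : ℕ) → Submodule ℝ (IdxH m p k → ℝ)) (k : ℕ) (i : Fin (k + 1))
    (h : (i : ℕ) + (k - (i : ℕ)) = k) :
    FK S k i = cast (congrArg (fun t => Submodule ℝ (IdxH m p t → ℝ)) h)
      (shiftIter m p (i : ℕ) (k - (i : ℕ)) (S i)) := by
  obtain ⟨i, hi⟩ := i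
  obtain ⟨t, rfl⟩ : ∃ t, k = i + t := ⟨k - i, by omega⟩
  rw [cast_shiftIter (S i) (i + t - i) t h]
  exact FK_eq S i t

theorem FK_sup {m p T : ℕ} (u : Fin T → Fin m → ℝ) (y : Fin T → Fin p → ℝ)
    (S : (k : ℕ) → Submodule ℝ (IdxH m p k → ℝ))
    (hS : ∀ k, Disjoint (BK u y k) (S k) ∧ BK u y k ⊔ S k = LK u y k) (k : ℕ) :
    (⨆ i, FK S k i) ⊔ NK u y k = LK u y k := by
  induction k with
  | zero =>
    rw [← (hS 0).2, sup_comm]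
    simp [FK, BK]
  | succ k ih =>
    have h1 : (⨆ i, FK S (k + 1) i) =
        (⨆ i, Submodule.map (shiftL m p k) (FK S k i)) ⊔ S (k + 1) := by
      apply le_antisymm
      · refine iSup_le fun i => ?_
        induction i using Fin.lastCases with
        | last => simp only [FK, Fin.lastCases_last]; exact le_sup_right
        | cast i =>
          simp only [FK, Fin.lastCases_castSucc]
          exact le_sup_of_le_left (le_iSup (fun i => Submodule.map (shiftL m p k) (FK S k i)) i)
      · refine sup_le (iSup_le fun i => ?_) ?_
        · refine le_trans (le_of_eq ?_) (le_iSup _ i.castSucc)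
          simp only [FK, Fin.lastCases_castSucc]
        · refine le_trans (le_of_eq ?_) (le_iSup _ (Fin.last (k + 1)))
          simp only [FK, Fin.lastCases_last]
    have h2 : Submodule.map (shiftL m p k) (NK u y k) ≤ NK u y (k + 1) := by
      rintro _ ⟨w, hw, rfl⟩
      have hw' := (mem_N u y k w).1 hw
      refine (mem_N u y (k + 1) _).2 ⟨shiftL_mem u y k w hw'.1, fun a => ?_⟩
      rw [shiftL_last]
      exact hw'.2 a
    rw [← (hS (k + 1)).2, BK, ← ih, Submodule.map_sup, Submodule.map_iSup, h1,
      sup_assoc _ (Submodule.map _ (NK u y k)) (NK u y (k + 1)), sup_eq_right.2 h2, sup_right_comm]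

theorem FK_indep {m p T : ℕ} (u : Fin T → Fin m → ℝ) (y : Fin T → Fin p → ℝ)
    (S : (k : ℕ) → Submodule ℝ (IdxH m p k → ℝ))
    (hS : ∀ k, Disjoint (BK u y k) (S k) ∧ BK u y k ⊔ S k = LK u y k) (k : ℕ)
    (f : Fin (k + 1) → (IdxH m p k → ℝ)) (hf : ∀ i, f i ∈ FK S k i) (n : IdxH m p k → ℝ)
    (hn : n ∈ NK u y k) (h0 : ∑ i, f i + n = 0) : (∀ i, f i = 0) ∧ n = 0 := by
  induction k with
  | zero =>
    have h := hf 0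
    simp only [FK] at h
    have h0' : f 0 + n = 0 := by simpa using h0
    have hd := Submodule.disjoint_def.1 (hS 0).1
    have hn0 : n = 0 := hd n hn (by
      rw [eq_neg_of_add_eq_zero_right h0']
      exact neg_mem h)
    subst hn0
    refine ⟨fun i => ?_, rfl⟩
    obtain rfl : i = 0 := Fin.ext (by omega)
    simpa using h0'
  | succ k ih =>
    have hL : ∀ i, FK S k i ≤ LK u y k := fun i =>
      le_trans (le_trans (le_iSup _ i) le_sup_left) (FK_sup u y S hS k).le
    have hs : f (Fin.last (k + 1)) ∈ S (k + 1) := by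
      have := hf (Fin.last (k + 1))
      simpa only [FK, Fin.lastCases_last] using this
    have hg : ∀ i : Fin (k + 1), ∃ g ∈ FK S k i, shiftL m p k g = f i.castSucc := by
      intro i
      have := hf i.castSucc
      simpa only [FK, Fin.lastCases_castSucc, Submodule.mem_map] using this
    choose g hg hgf using hg
    rw [Fin.sum_univ_castSucc] at h0
    simp only [← hgf] at h0
    rw [← map_sum] at h0
    have hgL : ∑ i, g i ∈ LK u y k := Submodule.sum_mem _ fun i _ => hL i (hg i)
    have hd := Submodule.disjoint_def.1 (hS (k + 1)).1
    have hs0 : f (Fin.last (k + 1)) = 0 := by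
      refine hd _ ?_ hs
      have : f (Fin.last (k + 1)) = -(shiftL m p k (∑ i, g i) + n) := by
        rw [eq_neg_iff_add_eq_zero, ← h0]; abel
      rw [this]
      exact neg_mem (Submodule.add_mem_sup (Submodule.mem_map_of_mem hgL) hn)
    rw [hs0, add_zero] at h0
    have hgN : ∑ i, g i ∈ NK u y k := by
      refine (mem_N u y k _).2 ⟨hgL, fun a => ?_⟩
      rw [← shiftL_last m p k (∑ i, g i) a, eq_neg_of_add_eq_zero_left h0, Pi.neg_apply,
        ((mem_N u y (k + 1) _).1 hn).2 a, neg_zero]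
    have hz := ih g hg (-∑ i, g i) (neg_mem hgN) (by simp)
    have hg0 : ∑ i, g i = 0 := neg_eq_zero.1 hz.2
    rw [hg0, map_zero, zero_add] at h0
    refine ⟨fun i => ?_, h0⟩
    induction i using Fin.lastCases with
    | last => exact hs0
    | cast i => rw [← hgf, hz.1 i, map_zero]

theorem stmt16 {m p T : ℕ}
    (u : Fin T → Fin m → ℝ) (y : Fin T → Fin p → ℝ)
    (k : ℕ) (hT : 1 ≤ T) (hk : k ≤ T - 1) :
    ∃ S : (i : Fin (k + 1)) → Submodule ℝ (IdxH m p (i : ℕ) → ℝ),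
      ∃ F : Fin (k + 1) → Submodule ℝ (IdxH m p k → ℝ),
        (∀ i : Fin (k + 1),
          F i = cast
            (congrArg (fun t => Submodule ℝ (IdxH m p t → ℝ))
              (by have := i.isLt; omega : (i : ℕ) + (k - (i : ℕ)) = k))
            (shiftIter m p (i : ℕ) (k - (i : ℕ)) (S i))) ∧
        iSupIndep
          (Sum.elim F fun _ : Unit =>
            Submodule.map (embedG m p k) (leftKernel (Gmat u y k))) ∧
        (⨆ j : Fin (k + 1) ⊕ Unit,
            Sum.elim F (fun _ : Unit =>
              Submodule.map (embedG m p k) (leftKernel (Gmat u y k))) j) =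
          leftKernel (Hmat u y k) ∧
        Module.finrank ℝ ↥(S ⟨k, Nat.lt_succ_self k⟩) =
          deltaExt u y k - deltaExt u y (k + 1) := by
  obtain ⟨S, hS⟩ := exists_S u y
  refine ⟨fun i => S i, FK S k, fun i => FK_cast S k i (by omega), ?_, ?_, ?_⟩
  · rw [iSupIndep_iff_finsetSum_eq_zero_imp_eq_zero]
    intro s v hv hs
    classical
    have key := FK_indep u y S hS k
      (fun i => if Sum.inl i ∈ s then v (Sum.inl i) else 0)
      (fun i => by
        by_cases h : Sum.inl i ∈ s
        · simpa only [h, if_true] using! hv _ h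
        · simp only [h, if_false]; exact zero_mem _)
      (if Sum.inr () ∈ s then v (Sum.inr ()) else 0)
      (by
        by_cases h : Sum.inr () ∈ s
        · simpa only [h, if_true] using! hv _ h
        · simp only [h, if_false]; exact zero_mem _)
      (by
        have e : ∑ z, (if z ∈ s then v z else 0) = 0 := by
          rw [Finset.sum_ite_mem, Finset.univ_inter, hs]
        rw [Fintype.sum_sum_type] at e
        simpa using e)
    intro z hz
    rcases z with i | ⟨⟩
    · simpa [hz] using key.1 i
    · simpa [hz] using key.2
  · rw [iSup_sum]
    simpa using FK_sup u y S hS k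
  · exact finrank_S u y k (S k) (hS k).1 (hS k).2
end
end

section
/- Define ℓ_min as the smallest lag and n_min as the smallest state dimension over all systems explaining the data, and q = min{k ∈ [0,T−1] : δ_k = 0}. Then ℓ_min = q and n_min = Σ_{i=0}^{ℓ_min} δ_i; moreover every explaining system with n_min states has lag ℓ_min and is observable. -/
open Matrix
noncomputable section

/-- `obsMat A C k` is the observability matrix Ω_k, the stack of C, CA, ..., CA^k. -/
def obsMat {ι : Type*} [Fintype ι] [DecidableEq ι] {p : ℕ}
    (A : Matrix ι ι ℝ) (C : Matrix (Fin p) ι ℝ) (k : ℕ) :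
    Matrix (Fin (k + 1) × Fin p) ι ℝ :=
  Matrix.of fun ir j => (C * A ^ (ir.1 : ℕ)) ir.2 j

/-- `obsRank A C (k+1) = rank Ω_k`; `obsRank A C 0 = rank Ω_{-1} = 0` (void matrix). -/
def obsRank {ι : Type*} [Fintype ι] [DecidableEq ι] {p : ℕ}
    (A : Matrix ι ι ℝ) (C : Matrix (Fin p) ι ℝ) : ℕ → ℕ
  | 0 => 0
  | k + 1 => (obsMat A C k).rank

/-- ρ_k = rank Ω_k − rank Ω_{k-1}. -/
def rho {ι : Type*} [Fintype ι] [DecidableEq ι] {p : ℕ}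
    (A : Matrix ι ι ℝ) (C : Matrix (Fin p) ι ℝ) (k : ℕ) : ℕ :=
  obsRank A C (k + 1) - obsRank A C k

/-- The lag ℓ(C,A): the smallest k ≥ 0 with rank Ω_k = rank Ω_{k-1}. -/
def lag {ι : Type*} [Fintype ι] [DecidableEq ι] {p : ℕ}
    (A : Matrix ι ι ℝ) (C : Matrix (Fin p) ι ℝ) : ℕ :=
  sInf {k | obsRank A C (k + 1) = obsRank A C k}

/-- (C,A) is observable iff rank Ω_{n-1} = n where n is the state dimension. -/
def Observable {ι : Type*} [Fintype ι] [DecidableEq ι] {p : ℕ}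
    (A : Matrix ι ι ℝ) (C : Matrix (Fin p) ι ℝ) : Prop :=
  obsRank A C (Fintype.card ι) = Fintype.card ι

/-- (A,B,C,D) explains the data (u,y) with state sequence x. -/
def Explains {ι : Type*} [Fintype ι] {m p T : ℕ}
    (A : Matrix ι ι ℝ) (B : Matrix ι (Fin m) ℝ)
    (C : Matrix (Fin p) ι ℝ) (D : Matrix (Fin p) (Fin m) ℝ)
    (u : Fin T → Fin m → ℝ) (y : Fin T → Fin p → ℝ) (x : Fin (T + 1) → ι → ℝ) : Prop :=
  ∀ t : Fin T,
    x t.succ = A.mulVec (x t.castSucc) + B.mulVec (u t) ∧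
    y t = C.mulVec (x t.castSucc) + D.mulVec (u t)

lemma finrank_sup_range_add_comap {V E : Type*} [AddCommGroup V] [Module ℝ V] [AddCommGroup E]
    [Module ℝ E] [FiniteDimensional ℝ V] [FiniteDimensional ℝ E] (φ : V →ₗ[ℝ] E)
    (S : Submodule ℝ E) :
    Module.finrank ℝ ↥(S ⊔ LinearMap.range φ) + Module.finrank ℝ ↥(S.comap φ)
      = Module.finrank ℝ S + Module.finrank ℝ V := by
  have h1 := Submodule.finrank_sup_add_finrank_inf_eq S (LinearMap.range φ)
  have h2 := LinearMap.finrank_range_add_finrank_ker φ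
  have h3 := LinearMap.finrank_range_add_finrank_ker (φ.domRestrict (S.comap φ))
  have h4 : LinearMap.range (φ.domRestrict (S.comap φ)) = S ⊓ LinearMap.range φ := by
    ext e
    simp only [LinearMap.mem_range, Submodule.mem_inf]
    constructor
    · rintro ⟨⟨v, hv⟩, rfl⟩
      exact ⟨hv, v, rfl⟩
    · rintro ⟨he, v, rfl⟩
      exact ⟨⟨v, he⟩, rfl⟩
  have h5 : Module.finrank ℝ (LinearMap.ker (φ.domRestrict (S.comap φ)))
      = Module.finrank ℝ (LinearMap.ker φ) := by
    have : LinearMap.ker (φ.domRestrict (S.comap φ))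
        = (LinearMap.ker φ).comap (S.comap φ).subtype := by
      ext v; simp
    rw [this]
    refine LinearEquiv.finrank_eq (Submodule.comapSubtypeEquivOfLe ?_)
    intro v hv
    simp only [LinearMap.mem_ker] at hv
    simp [hv]
  rw [h4, h5] at h3
  omega

/-- adapted spanning family for a flag -/
lemma exists_adapted {V : Type*} [AddCommGroup V] [Module ℝ V] [FiniteDimensional ℝ V]
    (W : ℕ → Submodule ℝ V) (hW : ∀ k, W k ≤ W (k + 1)) (k : ℕ) :
    ∃ (ι : Type) (_ : Fintype ι) (v : ι → V) (d : ι → ℕ),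
      (∀ i, v i ∈ W (d i)) ∧ Submodule.span ℝ (Set.range v) = W k ∧
      ∑ i, d i + ∑ i ∈ Finset.range k, Module.finrank ℝ (W i) = k * Module.finrank ℝ (W k) := by
  induction k with
  | zero =>
    let b := Module.finBasis ℝ (W 0)
    refine ⟨Fin (Module.finrank ℝ (W 0)), inferInstance, fun i => b i, fun _ => 0,
      fun i => (b i).2, ?_, by simp⟩
    have := congrArg (Submodule.map (W 0).subtype) b.span_eq
    rw [Submodule.map_span, ← Set.range_comp] at this
    simpa [Function.comp_def] using this
  | succ k ih =>
    obtain ⟨ι, _, v, d, h1, h2, h3⟩ := ih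
    obtain ⟨K', hK'⟩ := Submodule.exists_isCompl (W k)
    let K := K' ⊓ W (k + 1)
    have hsup : W k ⊔ K = W (k + 1) := by
      rw [← sup_inf_assoc_of_le _ (hW k), hK'.sup_eq_top, top_inf_eq]
    have hinf : W k ⊓ K = ⊥ := by
      rw [← inf_assoc, hK'.inf_eq_bot, bot_inf_eq]
    have hdim := Submodule.finrank_sup_add_finrank_inf_eq (W k) K
    rw [hsup, hinf, finrank_bot] at hdim
    let b := Module.finBasis ℝ K
    refine ⟨ι ⊕ Fin (Module.finrank ℝ K), inferInstance, Sum.elim v (fun i => b i),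
      Sum.elim d (fun _ => k + 1), ?_, ?_, ?_⟩
    · rintro (i | i)
      · exact h1 i
      · exact (b i).2.2
    · have := congrArg (Submodule.map K.subtype) b.span_eq
      rw [Submodule.map_span, ← Set.range_comp] at this
      rw [Set.Sum.elim_range, Submodule.span_union, h2, ← hsup]
      congr 1
      simpa [Function.comp_def] using this
    · rw [Fintype.sum_sum_type, Finset.sum_range_succ]
      simp only [Sum.elim_inl, Sum.elim_inr, Finset.sum_const, Finset.card_univ, Fintype.card_fin,
        smul_eq_mul]
      have : Module.finrank ℝ (W (k+1)) = Module.finrank ℝ (W k) + Module.finrank ℝ K := by omega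
      rw [this]
      linarith

section data
variable {m p T : ℕ} (u : Fin T → Fin m → ℝ) (y : Fin T → Fin p → ℝ)

def Ymat (k : ℕ) : Matrix (Fin p) (Fin (T - k)) ℝ :=
  Matrix.of fun l j => y ⟨k + (j : ℕ), by have h2 := j.isLt; omega⟩ l

def SG (k : ℕ) : Submodule ℝ (Fin (T - k) → ℝ) := Submodule.span ℝ (Set.range (Gmat u y k))

def Wd (k : ℕ) : Submodule ℝ (Fin p → ℝ) := (SG u y k).comap (Ymat y k).vecMulLinear

lemma span_H (k : ℕ) : Submodule.span ℝ (Set.range (Hmat u y k))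
    = SG u y k ⊔ LinearMap.range (Ymat y k).vecMulLinear := by
  rw [range_vecMulLinear, SG, ← Submodule.span_union]
  congr 1
  apply Set.Subset.antisymm
  · rintro _ ⟨(⟨i, l⟩ | ⟨i, l⟩), rfl⟩
    · exact Or.inl ⟨Sum.inl (i, l), rfl⟩
    · by_cases h : (i : ℕ) < k
      · exact Or.inl ⟨Sum.inr (⟨i, h⟩, l), rfl⟩
      · refine Or.inr ⟨l, ?_⟩
        have hi : (i : ℕ) = k := by have := i.isLt; omega
        ext j
        simp [Ymat, Hmat, hankel, hi, Matrix.row]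
  · rintro _ (⟨(⟨i, l⟩ | ⟨i, l⟩), rfl⟩ | ⟨l, rfl⟩)
    · exact ⟨Sum.inl (i, l), rfl⟩
    · exact ⟨Sum.inr (i.castSucc, l), rfl⟩
    · exact ⟨Sum.inr (Fin.last k, l), rfl⟩

lemma delta_eq (k : ℕ) : delta u y k + Module.finrank ℝ (Wd u y k) = p := by
  have h := finrank_sup_range_add_comap (Ymat y k).vecMulLinear (SG u y k)
  rw [← span_H] at h
  have h1 : (Hmat u y k).rank = Module.finrank ℝ (Submodule.span ℝ (Set.range (Hmat u y k))) :=
    Matrix.rank_eq_finrank_span_row _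
  have h2 : (Gmat u y k).rank = Module.finrank ℝ (SG u y k) :=
    Matrix.rank_eq_finrank_span_row _
  have h3 := Submodule.finrank_le (Wd u y k)
  simp only [Module.finrank_fin_fun] at h h3
  unfold delta
  rw [h1, h2]
  change _ + Module.finrank ℝ (Wd u y k) = _ at h
  omega

lemma Wd_top_iff (k : ℕ) : delta u y k = 0 ↔ Wd u y k = ⊤ := by
  have h := delta_eq u y k
  constructor
  · intro h0
    apply Submodule.eq_top_of_finrank_eq
    simp; omega
  · intro h0
    rw [h0] at h
    simpa using h

lemma delta_T : delta u y T = 0 := by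
  rw [Wd_top_iff, eq_top_iff]
  intro η _
  have : IsEmpty (Fin (T - T)) := by simp only [Nat.sub_self]; infer_instance
  have h0 : (Ymat y T).vecMulLinear η = 0 := Subsingleton.elim _ _
  change (Ymat y T).vecMulLinear η ∈ SG u y T
  rw [h0]
  exact zero_mem _

/-- zero extension -/
def ext0 {r T : ℕ} (f : Fin T → Fin r → ℝ) (t : ℕ) : Fin r → ℝ :=
  if h : t < T then f ⟨t, h⟩ else 0

def DataRel (k : ℕ) (η : Fin p → ℝ) : Prop :=
  ∃ (a : ℕ → Fin p → ℝ) (b : ℕ → Fin m → ℝ), ∀ t, t + k < T →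
    η ⬝ᵥ ext0 y (t + k) = ∑ i ∈ Finset.range k, a i ⬝ᵥ ext0 y (t + i)
      + ∑ i ∈ Finset.range (k + 1), b i ⬝ᵥ ext0 u (t + i)

lemma mem_Wd_iff (k : ℕ) (η : Fin p → ℝ) : η ∈ Wd u y k ↔ DataRel u y k η := by
  have key : ∀ (c : (Fin (k + 1) × Fin m) ⊕ (Fin k × Fin p) → ℝ) (a : ℕ → Fin p → ℝ)
      (b : ℕ → Fin m → ℝ), (∀ i l, a (i : Fin k) l = c (Sum.inr (i, l))) →
      (∀ i l, b (i : Fin (k + 1)) l = c (Sum.inl (i, l))) → 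
      (∑ i, c i • Gmat u y k i = (Ymat y k).vecMulLinear η ↔ ∀ t, t + k < T →
    η ⬝ᵥ ext0 y (t + k) = ∑ i ∈ Finset.range k, a i ⬝ᵥ ext0 y (t + i)
      + ∑ i ∈ Finset.range (k + 1), b i ⬝ᵥ ext0 u (t + i)) := by
    intro c a b ha hb
    have hpt : ∀ j : Fin (T - k), ((∑ i, c i • Gmat u y k i) j = (Ymat y k).vecMulLinear η j ↔ 
      η ⬝ᵥ ext0 y (j + k) = ∑ i ∈ Finset.range k, a i ⬝ᵥ ext0 y (j + i)
      + ∑ i ∈ Finset.range (k + 1), b i ⬝ᵥ ext0 u (j + i)) := by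
      intro j
      have hj := j.isLt
      have e1 : (Ymat y k).vecMulLinear η j = η ⬝ᵥ ext0 y (j + k) := by
        have : k + (j : ℕ) < T := by omega
        simp [Ymat, Matrix.vecMul, dotProduct, ext0, this, add_comm]
      have e2 : (∑ i, c i • Gmat u y k i) j = ∑ i ∈ Finset.range k, a i ⬝ᵥ ext0 y (j + i)
          + ∑ i ∈ Finset.range (k + 1), b i ⬝ᵥ ext0 u (j + i) := by
        rw [Finset.sum_range, Finset.sum_range, Finset.sum_apply, Fintype.sum_sum_type,
          Fintype.sum_prod_type, Fintype.sum_prod_type, add_comm]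
        congr 1
        · refine Finset.sum_congr rfl fun i _ => Finset.sum_congr rfl fun l _ => ?_
          have : i + (j : ℕ) < T := by have := i.isLt; omega
          have this2 : (j : ℕ) + i < T := by omega
          simp [Gmat, ext0, this, this2, ha, add_comm]
        · refine Finset.sum_congr rfl fun i _ => Finset.sum_congr rfl fun l _ => ?_
          have : i + (j : ℕ) < T := by have := i.isLt; omega
          have this2 : (j : ℕ) + i < T := by omega
          simp [Gmat, hankel, ext0, this, this2, hb, add_comm]
      rw [e1, e2]
      exact eq_comm
    constructor
    · intro h t ht
      exact (hpt ⟨t, by omega⟩).1 (congrFun h _)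
    · intro h
      ext j
      exact (hpt j).2 (h j (by have := j.isLt; omega))
  change (Ymat y k).vecMulLinear η ∈ SG u y k ↔ _
  refine Iff.trans (Submodule.mem_span_range_iff_exists_fun ℝ) ?_
  constructor
  · rintro ⟨c, hc⟩
    refine ⟨fun i l => if h : i < k then c (Sum.inr (⟨i, h⟩, l)) else 0,
      fun i l => if h : i < k + 1 then c (Sum.inl (⟨i, h⟩, l)) else 0, ?_⟩
    refine (key c _ _ ?_ ?_).1 hc
    · intro i l; simp
    · intro i l
      have := i.isLt
      simp [this]
  · rintro ⟨a, b, h⟩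
    refine ⟨Sum.elim (fun il => b il.1 il.2) (fun il => a il.1 il.2), ?_⟩
    exact (key _ a b (fun _ _ => rfl) (fun _ _ => rfl)).2 h

lemma Wd_mono (k : ℕ) : Wd u y k ≤ Wd u y (k + 1) := by
  intro η
  rw [mem_Wd_iff, mem_Wd_iff]
  rintro ⟨a, b, h⟩
  refine ⟨fun i => Nat.casesOn i 0 a, fun i => Nat.casesOn i 0 b, fun t ht => ?_⟩
  have := h (t + 1) (by omega)
  rw [Finset.sum_range_succ', Finset.sum_range_succ' _ (k + 1)]
  simp only [Nat.rec_zero, zero_dotProduct, add_zero]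
  have e : t + (k + 1) = t + 1 + k := by omega
  rw [e, this]
  have e3 : ∀ i, t + 1 + i = t + (i + 1) := fun i => by omega
  simp only [e3]

lemma exists_explains_of_mem {N : ℕ} (x : Fin (T + 1) → Fin N → ℝ) (L : Submodule ℝ (Fin T → ℝ))
    (hL : L = Submodule.span ℝ (Set.range (fun (i : Fin N) (t : Fin T) => x t.castSucc i))
      ⊔ Submodule.span ℝ (Set.range (fun (i : Fin m) (t : Fin T) => u t i)))
    (hx : ∀ i, (fun t : Fin T => x t.succ i) ∈ L) (hy : ∀ i, (fun t => y t i) ∈ L) :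
    ∃ A : Matrix (Fin N) (Fin N) ℝ,
      ∃ B : Matrix (Fin N) (Fin m) ℝ, ∃ C : Matrix (Fin p) (Fin N) ℝ,
      ∃ D : Matrix (Fin p) (Fin m) ℝ, Explains A B C D u y x := by
  have key : ∀ f ∈ L, ∃ (a : Fin N → ℝ) (b : Fin m → ℝ), ∀ t,
      f t = a ⬝ᵥ x t.castSucc + b ⬝ᵥ u t := by
    intro f hf
    rw [hL, Submodule.mem_sup] at hf
    obtain ⟨f1, h1, f2, h2, rfl⟩ := hf
    rw [Submodule.mem_span_range_iff_exists_fun] at h1 h2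
    obtain ⟨a, rfl⟩ := h1
    obtain ⟨b, rfl⟩ := h2
    exact ⟨a, b, fun t => by simp [dotProduct]⟩
  choose A B hAB using fun i => key _ (hx i)
  choose C D hCD using fun i => key _ (hy i)
  refine ⟨A, B, C, D, fun t => ⟨?_, ?_⟩⟩
  · ext i; exact hAB i t
  · ext i; exact hCD i t

lemma exists_chain (d : ℕ) (η : Fin p → ℝ) (h : DataRel u y d η) :
    ∃ (a : ℕ → Fin p → ℝ) (b : ℕ → Fin m → ℝ) (X : ℕ → ℕ → ℝ),
      (∀ t, t < T → η ⬝ᵥ ext0 y t = X 0 t + b d ⬝ᵥ ext0 u t) ∧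
      (∀ t, X d t = 0) ∧
      (∀ s t, s < d → X s (t + 1) = X (s + 1) t + 
        (a (d - (s + 1)) ⬝ᵥ ext0 y t + b (d - (s + 1)) ⬝ᵥ ext0 u t)) := by
  obtain ⟨a, b, h⟩ := h
  let g : ℕ → ℕ → ℝ := fun i t => a i ⬝ᵥ ext0 y t + b i ⬝ᵥ ext0 u t
  let w : ℕ → ℝ := fun r => if r < T then η ⬝ᵥ ext0 y r - b d ⬝ᵥ ext0 u r
    else ∑ i ∈ Finset.range d, g i (r - d + i)
  refine ⟨a, b, fun s t => w (t + s) - ∑ i ∈ Finset.range s, g (d - s + i) (t + i), ?_, ?_, ?_⟩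
  · intro t ht
    simp [w, ht]
  · intro t
    simp only [w, Nat.sub_self, zero_add, Nat.add_sub_cancel]
    split_ifs with ht
    · rw [h t ht, Finset.sum_range_succ]
      simp only [g, Finset.sum_add_distrib]
      ring
    · simp
  · intro s t hs
    simp only []
    rw [Finset.sum_range_succ']
    have e : ∀ i, g (d - (s + 1) + (i + 1)) (t + (i + 1)) = g (d - s + i) (t + 1 + i) := by
      intro i
      congr 1 <;> omega
    simp only [e]
    have e2 : t + 1 + s = t + (s + 1) := by omega
    rw [e2]
    simp only [g, add_zero]
    ring

lemma exists_realization (q : ℕ) (hq : delta u y q = 0) :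
    ∃ A : Matrix (Fin (∑ i ∈ Finset.range q, delta u y i)) (Fin (∑ i ∈ Finset.range q, delta u y i)) ℝ,
      ∃ B : Matrix (Fin (∑ i ∈ Finset.range q, delta u y i)) (Fin m) ℝ,
      ∃ C : Matrix (Fin p) (Fin (∑ i ∈ Finset.range q, delta u y i)) ℝ,
      ∃ D : Matrix (Fin p) (Fin m) ℝ,
      ∃ x : Fin (T + 1) → Fin (∑ i ∈ Finset.range q, delta u y i) → ℝ,
      Explains A B C D u y x := by
  obtain ⟨ι, _, η, d, h1, h2, h3⟩ := exists_adapted (Wd u y) (Wd_mono u y) q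
  have hN : ∑ i, d i = ∑ i ∈ Finset.range q, delta u y i := by
    rw [(Wd_top_iff u y q).1 hq, finrank_top, Module.finrank_fin_fun] at h3
    have : ∑ i ∈ Finset.range q, (delta u y i + Module.finrank ℝ (Wd u y i)) = q * p := by
      simp [delta_eq]
    rw [Finset.sum_add_distrib] at this
    omega
  rw [← hN]
  choose a b X hX0 hXd hXs using fun j => exists_chain u y (d j) (η j) ((mem_Wd_iff u y _ _).1 (h1 j))
  let e : Fin (∑ i, d i) ≃ (Σ j, Fin (d j)) := (Fintype.equivFinOfCardEq (by simp)).symm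
  let x : Fin (T + 1) → Fin (∑ i, d i) → ℝ := fun t i => X (e i).1 (e i).2 t
  let L := Submodule.span ℝ (Set.range (fun (i : Fin (∑ i, d i)) (t : Fin T) => x t.castSucc i))
      ⊔ Submodule.span ℝ (Set.range (fun (i : Fin m) (t : Fin T) => u t i))
  have hu : ∀ c : Fin m → ℝ, (fun t : Fin T => c ⬝ᵥ ext0 u t) ∈ L := by
    intro c
    have : (fun t : Fin T => c ⬝ᵥ ext0 u t) = ∑ i, c i • fun t => u t i := by
      ext t; simp [dotProduct, ext0]
    rw [this]
    exact Submodule.sum_mem _ fun i _ => Submodule.smul_mem _ _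
      (Submodule.mem_sup_right (Submodule.subset_span ⟨i, rfl⟩))
  have hX : ∀ j s, s ≤ d j → (fun t : Fin T => X j s t) ∈ L := by
    intro j s hs
    rcases hs.lt_or_eq with hs | rfl
    · refine Submodule.mem_sup_left (Submodule.subset_span ⟨e.symm ⟨j, ⟨s, hs⟩⟩, ?_⟩)
      ext t
      simp only [x]
      rw [e.apply_symm_apply]
      rfl
    · have : (fun t : Fin T => X j (d j) t) = 0 := by ext t; simp [hXd]
      rw [this]; exact zero_mem _
  have hy : ∀ c : Fin p → ℝ, (fun t : Fin T => c ⬝ᵥ ext0 y t) ∈ L := by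
    let φ : (Fin p → ℝ) →ₗ[ℝ] (Fin T → ℝ) :=
      { toFun := fun c t => c ⬝ᵥ ext0 y t
        map_add' := fun c c' => by ext t; simp [add_dotProduct]
        map_smul' := fun r c => by ext t; simp }
    have : (⊤ : Submodule ℝ (Fin p → ℝ)) ≤ L.comap φ := by
      rw [← (Wd_top_iff u y q).1 hq, ← h2, Submodule.span_le]
      rintro _ ⟨j, rfl⟩
      change (fun t : Fin T => η j ⬝ᵥ ext0 y t) ∈ L
      have : (fun t : Fin T => η j ⬝ᵥ ext0 y t) = (fun t : Fin T => X j 0 t)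
          + (fun t : Fin T => b j (d j) ⬝ᵥ ext0 u t) := by
        ext t; exact hX0 j t t.isLt
      rw [this]
      exact add_mem (hX j 0 (Nat.zero_le _)) (hu _)
    intro c
    exact this (Submodule.mem_top (x := c))
  obtain ⟨A, B, C, D, h⟩ := exists_explains_of_mem u y x L rfl (by
      intro i
      have : (fun t : Fin T => x t.succ i) = (fun t : Fin T => X (e i).1 ((e i).2 + 1) t) +
        ((fun t : Fin T => a (e i).1 (d (e i).1 - ((e i).2 + 1)) ⬝ᵥ ext0 y t) +
        (fun t : Fin T => b (e i).1 (d (e i).1 - ((e i).2 + 1)) ⬝ᵥ ext0 u t)) := by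
        ext t
        exact hXs _ _ _ (e i).2.isLt
      rw [this]
      exact add_mem (hX _ _ (e i).2.isLt) (add_mem (hy _) (hu _))) (by
      intro i
      have := hy (Pi.single i 1)
      simpa [ext0] using this)
  exact ⟨A, B, C, D, x, h⟩

end data

section sys
variable {n p : ℕ} (A : Matrix (Fin n) (Fin n) ℝ) (C : Matrix (Fin p) (Fin n) ℝ)

def Osp (k : ℕ) : Submodule ℝ (Fin n → ℝ) :=
  Submodule.span ℝ (Set.range fun ir : Fin k × Fin p => (C * A ^ (ir.1 : ℕ)) ir.2)

lemma obsRank_eq (k : ℕ) : obsRank A C k = Module.finrank ℝ (Osp A C k) := by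
  cases k with
  | zero =>
    rw [Osp, Set.range_eq_empty, Submodule.span_empty, finrank_bot]
    rfl
  | succ k => exact Matrix.rank_eq_finrank_span_row _

lemma Osp_succ (k : ℕ) : Osp A C (k + 1) = Osp A C k ⊔ LinearMap.range (C * A ^ k).vecMulLinear := by
  rw [range_vecMulLinear, Osp, Osp, ← Submodule.span_union]
  congr 1
  apply Set.Subset.antisymm
  · rintro _ ⟨⟨i, l⟩, rfl⟩
    by_cases h : (i : ℕ) < k
    · exact Or.inl ⟨(⟨i, h⟩, l), rfl⟩
    · have hi : (i : ℕ) = k := by have := i.isLt; omega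
      refine Or.inr ⟨l, ?_⟩
      simp [hi, Matrix.row]
  · rintro _ (⟨⟨i, l⟩, rfl⟩ | ⟨l, rfl⟩)
    · exact ⟨(i.castSucc, l), rfl⟩
    · exact ⟨(Fin.last k, l), rfl⟩

lemma obsRank_succ (k : ℕ) : obsRank A C (k + 1) +
    Module.finrank ℝ ((Osp A C k).comap (C * A ^ k).vecMulLinear) = obsRank A C k + p := by
  rw [obsRank_eq, obsRank_eq, Osp_succ]
  simpa using finrank_sup_range_add_comap (C * A ^ k).vecMulLinear (Osp A C k)

lemma obsRank_le (k : ℕ) : obsRank A C k ≤ n := by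
  rw [obsRank_eq]; simpa using Submodule.finrank_le (Osp A C k)

lemma obsRank_mono : Monotone (obsRank A C) := by
  refine monotone_nat_of_le_succ fun k => ?_
  rw [obsRank_eq, obsRank_eq, Osp_succ]
  exact Submodule.finrank_mono le_sup_left

lemma comap_le_Wd {m T : ℕ} (B : Matrix (Fin n) (Fin m) ℝ) (D : Matrix (Fin p) (Fin m) ℝ)
    (u : Fin T → Fin m → ℝ) (y : Fin T → Fin p → ℝ) (x : Fin (T + 1) → Fin n → ℝ)
    (h : Explains A B C D u y x) (k : ℕ) :
    (Osp A C k).comap (C * A ^ k).vecMulLinear ≤ Wd u y k := by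
  let X : ℕ → Fin n → ℝ := fun t => if h : t < T + 1 then x ⟨t, h⟩ else 0
  have hX : ∀ t, t < T → X (t + 1) = A *ᵥ X t + B *ᵥ ext0 u t := by
    intro t ht
    have h2 : t ≤ T := by omega
    simpa [X, ext0, ht, h2] using (h ⟨t, ht⟩).1
  have hY : ∀ t, t < T → ext0 y t = C *ᵥ X t + D *ᵥ ext0 u t := by
    intro t ht
    have h2 : t ≤ T := by omega
    simpa [X, ext0, ht, h2] using (h ⟨t, ht⟩).2
  have hu : ∀ i, i ≤ k → ∀ c : Fin m → ℝ,
      (fun j : Fin (T - k) => c ⬝ᵥ ext0 u (j + i)) ∈ SG u y k := by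
    intro i hi c
    have : (fun j : Fin (T - k) => c ⬝ᵥ ext0 u (j + i)) =
        ∑ l, c l • Gmat u y k (Sum.inl (⟨i, by omega⟩, l)) := by
      ext j
      have : i + (j : ℕ) < T := by have := j.isLt; omega
      simp [dotProduct, ext0, Gmat, hankel, this, add_comm]
    rw [this]
    exact Submodule.sum_mem _ fun l _ => Submodule.smul_mem _ _ (Submodule.subset_span ⟨_, rfl⟩)
  have hy : ∀ i, i < k → ∀ r : Fin p,
      (fun j : Fin (T - k) => ext0 y (j + i) r) ∈ SG u y k := by
    intro i hi r
    have : (fun j : Fin (T - k) => ext0 y (j + i) r) = Gmat u y k (Sum.inr (⟨i, hi⟩, r)) := by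
      ext j
      have : i + (j : ℕ) < T := by have := j.isLt; omega
      simp [ext0, Gmat, this, add_comm]
    rw [this]
    exact Submodule.subset_span ⟨_, rfl⟩
  have c1 : ∀ i, i ≤ k → ∀ w : Fin n → ℝ,
      (fun j : Fin (T - k) => w ⬝ᵥ X (j + i) - (w ᵥ* A ^ i) ⬝ᵥ X j) ∈ SG u y k := by
    intro i
    induction i with
    | zero =>
      intro _ w
      convert zero_mem (SG u y k) using 1
      ext j; simp
    | succ i ih =>
      intro hi w
      convert add_mem (ih (by omega) (w ᵥ* A)) (hu i (by omega) (w ᵥ* B)) using 1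
      ext j
      have e := hX (j + i) (by have := j.isLt; omega)
      have e2 : (j : ℕ) + (i + 1) = j + i + 1 := by omega
      rw [e2, e]
      simp only [Pi.add_apply, dotProduct_add, dotProduct_mulVec, pow_succ', vecMul_vecMul]
      ring
  -- output formula
  have c2 : ∀ i, i ≤ k → ∀ c : Fin p → ℝ, (fun j : Fin (T - k) => c ⬝ᵥ ext0 y (j + i)
      - (c ᵥ* (C * A ^ i)) ⬝ᵥ X j) ∈ SG u y k := by
    intro i hi c
    convert add_mem (c1 i hi (c ᵥ* C)) (hu i hi (c ᵥ* D)) using 1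
    ext j
    rw [hY (j + i) (by have := j.isLt; omega)]
    simp only [Pi.add_apply, dotProduct_add, dotProduct_mulVec, vecMul_vecMul]
    ring
  let ψ : (Fin n → ℝ) →ₗ[ℝ] (Fin (T - k) → ℝ) :=
    { toFun := fun v j => v ⬝ᵥ X j
      map_add' := fun c c' => by ext t; simp [add_dotProduct]
      map_smul' := fun r c => by ext t; simp }
  have hO : Osp A C k ≤ (SG u y k).comap ψ := by
    rw [Osp, Submodule.span_le]
    rintro _ ⟨⟨i, r⟩, rfl⟩
    have := sub_mem (hy i i.isLt r) (c2 i i.isLt.le (Pi.single r 1))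
    change (fun j : Fin (T - k) => ((C * A ^ (i : ℕ)) r) ⬝ᵥ X j) ∈ SG u y k
    convert this using 1
    ext j
    simp [Matrix.row]
  intro η hη
  have h1 : (fun j : Fin (T - k) => (η ᵥ* (C * A ^ k)) ⬝ᵥ X j) ∈ SG u y k := hO hη
  change (Ymat y k).vecMulLinear η ∈ SG u y k
  convert add_mem h1 (c2 k le_rfl η) using 1
  ext j
  have : k + (j : ℕ) < T := by have := j.isLt; omega
  simp [Ymat, Matrix.vecMul, dotProduct, ext0, this, add_comm]

lemma delta_le {m T : ℕ} (B : Matrix (Fin n) (Fin m) ℝ) (D : Matrix (Fin p) (Fin m) ℝ)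
    (u : Fin T → Fin m → ℝ) (y : Fin T → Fin p → ℝ) (x : Fin (T + 1) → Fin n → ℝ)
    (h : Explains A B C D u y x) (k : ℕ) :
    obsRank A C k + delta u y k ≤ obsRank A C (k + 1) := by
  have h1 := obsRank_succ A C k
  have h2 := delta_eq u y k
  have h3 := Submodule.finrank_mono (comap_le_Wd A C B D u y x h k)
  omega

lemma sum_delta_le {m T : ℕ} (B : Matrix (Fin n) (Fin m) ℝ) (D : Matrix (Fin p) (Fin m) ℝ)
    (u : Fin T → Fin m → ℝ) (y : Fin T → Fin p → ℝ) (x : Fin (T + 1) → Fin n → ℝ)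
    (h : Explains A B C D u y x) (k : ℕ) :
    ∑ i ∈ Finset.range k, delta u y i ≤ obsRank A C k := by
  induction k with
  | zero => simp
  | succ k ih =>
    rw [Finset.sum_range_succ]
    have := delta_le A C B D u y x h k
    omega

lemma lag_nonempty : {k | obsRank A C (k + 1) = obsRank A C k}.Nonempty := by
  by_contra hne
  rw [Set.not_nonempty_iff_eq_empty] at hne
  have hk : ∀ k, k ≤ obsRank A C k := by
    intro k
    induction k with
    | zero => simp
    | succ k ih =>
      have h1 := obsRank_mono A C (Nat.le_succ k)
      have h2 : k ∉ {k | obsRank A C (k + 1) = obsRank A C k} := by rw [hne]; simp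
      simp only [Set.mem_ofPred_eq] at h2
      simp only [Nat.succ_eq_add_one] at h1
      omega
  have := hk (n + 1)
  have := obsRank_le A C (n + 1)
  omega

lemma le_obsRank_of_le_lag (k : ℕ) (hk : k ≤ lag A C) : k ≤ obsRank A C k := by
  induction k with
  | zero => simp
  | succ k ih =>
    have h1 := obsRank_mono A C (Nat.le_succ k)
    have h2 : k ∉ {k | obsRank A C (k + 1) = obsRank A C k} :=
      Nat.notMem_of_lt_sInf (show k < lag A C by omega)
    simp only [Set.mem_ofPred_eq] at h2
    simp only [Nat.succ_eq_add_one] at h1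
    have := ih (by omega)
    omega

end sys

theorem stmt17 {m p T : ℕ}
    (u : Fin T → Fin m → ℝ) (y : Fin T → Fin p → ℝ)
    (hu : u ≠ 0) (hT : 1 ≤ T) :
    letI q := sInf {k | delta u y k = 0}
    letI lmin := sInf {ℓ | ∃ n, ∃ A : Matrix (Fin n) (Fin n) ℝ,
      ∃ B : Matrix (Fin n) (Fin m) ℝ, ∃ C : Matrix (Fin p) (Fin n) ℝ,
      ∃ D : Matrix (Fin p) (Fin m) ℝ, ∃ x : Fin (T + 1) → Fin n → ℝ,
      Explains A B C D u y x ∧ lag A C = ℓ}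
    letI nmin := sInf {n | ∃ A : Matrix (Fin n) (Fin n) ℝ,
      ∃ B : Matrix (Fin n) (Fin m) ℝ, ∃ C : Matrix (Fin p) (Fin n) ℝ,
      ∃ D : Matrix (Fin p) (Fin m) ℝ, ∃ x : Fin (T + 1) → Fin n → ℝ,
      Explains A B C D u y x}
    lmin = q ∧
    nmin = ∑ i ∈ Finset.range (lmin + 1), delta u y i ∧
    ∀ (A : Matrix (Fin nmin) (Fin nmin) ℝ) (B : Matrix (Fin nmin) (Fin m) ℝ)
      (C : Matrix (Fin p) (Fin nmin) ℝ) (D : Matrix (Fin p) (Fin m) ℝ)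
      (x : Fin (T + 1) → Fin nmin → ℝ),
      Explains A B C D u y x → lag A C = lmin ∧ Observable A C := by
  set q := sInf {k | delta u y k = 0} with hqdef
  set lmin := sInf {ℓ | ∃ n, ∃ A : Matrix (Fin n) (Fin n) ℝ,
      ∃ B : Matrix (Fin n) (Fin m) ℝ, ∃ C : Matrix (Fin p) (Fin n) ℝ,
      ∃ D : Matrix (Fin p) (Fin m) ℝ, ∃ x : Fin (T + 1) → Fin n → ℝ,
      Explains A B C D u y x ∧ lag A C = ℓ} with hldef
  set nmin := sInf {n | ∃ A : Matrix (Fin n) (Fin n) ℝ,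
      ∃ B : Matrix (Fin n) (Fin m) ℝ, ∃ C : Matrix (Fin p) (Fin n) ℝ,
      ∃ D : Matrix (Fin p) (Fin m) ℝ, ∃ x : Fin (T + 1) → Fin n → ℝ,
      Explains A B C D u y x} with hndef
  have hq : delta u y q = 0 := Nat.sInf_mem (s := {k | delta u y k = 0}) ⟨T, delta_T u y⟩
  have hlag_ge : ∀ (n : ℕ) (A : Matrix (Fin n) (Fin n) ℝ) (B : Matrix (Fin n) (Fin m) ℝ)
      (C : Matrix (Fin p) (Fin n) ℝ) (D : Matrix (Fin p) (Fin m) ℝ)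
      (x : Fin (T + 1) → Fin n → ℝ), Explains A B C D u y x → q ≤ lag A C := by
    intro n A B C D x h
    have h1 : obsRank A C (lag A C + 1) = obsRank A C (lag A C) := Nat.sInf_mem (lag_nonempty A C)
    have h2 := delta_le A C B D u y x h (lag A C)
    exact Nat.sInf_le (show delta u y (lag A C) = 0 by omega)
  have hmain : ∀ (n : ℕ) (A : Matrix (Fin n) (Fin n) ℝ) (B : Matrix (Fin n) (Fin m) ℝ)
      (C : Matrix (Fin p) (Fin n) ℝ) (D : Matrix (Fin p) (Fin m) ℝ)
      (x : Fin (T + 1) → Fin n → ℝ), n = ∑ i ∈ Finset.range q, delta u y i →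
      Explains A B C D u y x → lag A C = q ∧ Observable A C := by
    intro n A B C D x hn h
    have h1 := sum_delta_le A C B D u y x h q
    have h2 := obsRank_le A C q
    have h3 := obsRank_le A C (q + 1)
    have h4 := obsRank_mono A C (Nat.le_succ q)
    simp only [Nat.succ_eq_add_one] at h4
    have hl : lag A C = q := le_antisymm
      (Nat.sInf_le (show obsRank A C (q + 1) = obsRank A C q by omega)) (hlag_ge n A B C D x h)
    refine ⟨hl, ?_⟩
    have h5 := le_obsRank_of_le_lag A C q hl.ge
    have h6 := obsRank_mono A C (show q ≤ n by omega)
    have h7 := obsRank_le A C n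
    simp only [Observable, Fintype.card_fin]
    omega
  obtain ⟨A, B, C, D, x, h⟩ := exists_realization u y q hq
  have hlmin : lmin = q := by
    apply le_antisymm
    · exact Nat.sInf_le ⟨_, A, B, C, D, x, h, (hmain _ A B C D x rfl h).1⟩
    · refine le_csInf ⟨_, _, A, B, C, D, x, h, rfl⟩ ?_
      rintro _ ⟨n, A, B, C, D, x, h, rfl⟩
      exact hlag_ge n A B C D x h
  have hnmin : nmin = ∑ i ∈ Finset.range q, delta u y i := by
    apply le_antisymm
    · exact Nat.sInf_le ⟨A, B, C, D, x, h⟩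
    · refine le_csInf ⟨_, A, B, C, D, x, h⟩ ?_
      rintro n ⟨A, B, C, D, x, h⟩
      exact (sum_delta_le A C B D u y x h q).trans (obsRank_le A C q)
  refine ⟨hlmin, ?_, ?_⟩
  · rw [hlmin, Finset.sum_range_succ, hq, add_zero, hnmin]
  · intro A B C D x h
    rw [hlmin]
    exact hmain _ A B C D x hnmin h
end
end
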